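/- arXiv:1905.03526 — 4 statements merged into one kernel-verified Lean document; each statement's English description precedes it below -/
import Mathlib

section
/- Let T > 0 and α ∈ ℝ. Let F : [0,T] → ℝ be continuous with F(0) < α, suppose the set {t ∈ [0,T] : F(t) ≥ α} is nonempty, and let τ = inf{t ∈ [0,T] : F(t) ≥ α} with τ < T. Assume F is differentiable at τ with F'(τ) > 0. Let (F_ρ)_{ρ≠0} be a family of continuous functions on [0,T] such that sup_{t∈[0,T]} |F_ρ(t) − F(t)| → 0 as ρ → 0. Define τ_ρ := inf({t ∈ [0,T] : F_ρ(t) ≥ α} ∪ {T}). Then τ_ρ → τ as ρ → 0. -/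
open Set Filter

/-!
The infimum defining `τ` is attained, so `α ≤ F τ`, and `0 < τ` because `F 0 < α`.

* Lower bound: on a compact interval `[0, b]` with `b < τ`, the maximum of `F` is strictly below
  `α`, so uniformly close perturbations stay below `α` there and their hitting times are at
  least `b`.
* Upper bound: the positive derivative gives points `t > τ` arbitrarily close to `τ` with
  `α < F t`; perturbations close to `F` at `t` also exceed `α` there, so their hitting times are
  at most `t`.
-/

/-- Lemma 3.1(i) (deterministic content): continuity of the varying terminal
time under uniform perturbations, when `τ < T` and `F` has positive derivative
at `τ`. -/
theorem terminal_time_continuity_interior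
    (T α : ℝ) (hT : 0 < T) (F : ℝ → ℝ)
    (hF : ContinuousOn F (Set.Icc 0 T))
    (h0 : F 0 < α)
    (hne : {t ∈ Set.Icc 0 T | α ≤ F t}.Nonempty)
    (τ : ℝ) (hτ : τ = sInf {t ∈ Set.Icc 0 T | α ≤ F t})
    (hτT : τ < T)
    (d : ℝ) (hd : HasDerivAt F d τ) (hdpos : 0 < d)
    (Fρ : ℝ → ℝ → ℝ)
    (hFρcont : ∀ ρ : ℝ, ρ ≠ 0 → ContinuousOn (Fρ ρ) (Set.Icc 0 T))
    (hconv : TendstoUniformlyOn Fρ F (nhdsWithin 0 {(0 : ℝ)}ᶜ) (Set.Icc 0 T)) :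
    Tendsto (fun ρ : ℝ => sInf ({t ∈ Set.Icc 0 T | α ≤ Fρ ρ t} ∪ {T}))
      (nhdsWithin 0 {(0 : ℝ)}ᶜ) (nhds τ) := by
  have hlow : ∀ t ∈ Icc 0 T, α ≤ F t → τ ≤ t := fun t ht h =>
    hτ ▸ csInf_le ⟨0, fun x hx => hx.1.1⟩ ⟨ht, h⟩
  have hmem : τ ∈ {t ∈ Icc 0 T | α ≤ F t} := by
    have hcl : IsClosed {t ∈ Icc 0 T | α ≤ F t} :=
      hF.preimage_isClosed_of_isClosed isClosed_Icc isClosed_Ici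
    rw [hτ]
    exact hcl.csInf_mem hne ⟨0, fun x hx => hx.1.1⟩
  obtain ⟨⟨hτ0, -⟩, hατ⟩ := hmem
  have hτpos : 0 < τ := by
    rcases hτ0.eq_or_lt with h | h
    · rw [← h] at hατ
      exact absurd h0 (not_lt.2 hατ)
    · exact h
  rw [Metric.tendstoUniformlyOn_iff] at hconv
  refine tendsto_order.2 ⟨fun a ha => ?_, fun a ha => ?_⟩
  · obtain ⟨b, hb, hbτ⟩ := exists_between (max_lt ha hτpos)
    have hab : a < b := (le_max_left _ _).trans_lt hb
    have hb0 : 0 < b := (le_max_right _ _).trans_lt hb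
    have hsub : Icc 0 b ⊆ Icc 0 T := Icc_subset_Icc_right (hbτ.trans hτT).le
    obtain ⟨m, hm, hmax⟩ :=
      isCompact_Icc.exists_isMaxOn (nonempty_Icc.2 hb0.le) (hF.mono hsub)
    have hmα : F m < α := by
      by_contra! h
      exact absurd (hlow m (hsub hm) h) (not_le.2 (hm.2.trans_lt hbτ))
    filter_upwards [hconv (α - F m) (sub_pos.2 hmα)] with ρ hρ
    refine hab.trans_le (le_csInf ⟨T, Or.inr rfl⟩ ?_)
    rintro t (⟨ht, hαt⟩ | rfl)
    · by_contra! htb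
      have h1 := hρ t ht
      have h2 : F t ≤ F m := hmax ⟨ht.1, htb.le⟩
      rw [Real.dist_eq] at h1
      linarith [(abs_lt.1 h1).1]
    · exact (hbτ.trans hτT).le
  · obtain ⟨t, hαt, hτt, htm⟩ : ∃ t, α < F t ∧ τ < t ∧ t < min a T := by
      have hs : ∀ᶠ t in nhdsWithin τ (Ioi τ), 0 < slope F τ t :=
        ((hasDerivAt_iff_tendsto_slope.1 hd).mono_left
          (nhdsWithin_mono _ fun x hx => ne_of_gt hx)).eventually_const_lt hdpos
      obtain ⟨t, ht, hτt, htm⟩ := (hs.and (Ioo_mem_nhdsGT (lt_min ha hτT))).exists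
      rw [slope_def_field, div_pos_iff_of_pos_right (sub_pos.2 hτt)] at ht
      exact ⟨t, by linarith, hτt, htm⟩
    have htI : t ∈ Icc 0 T := ⟨(hτpos.trans hτt).le, (htm.trans_le (min_le_right _ _)).le⟩
    filter_upwards [hconv (F t - α) (sub_pos.2 hαt)] with ρ hρ
    have h1 := hρ t htI
    rw [Real.dist_eq] at h1
    have hbdd : BddBelow ({t ∈ Icc 0 T | α ≤ Fρ ρ t} ∪ {T}) := by
      refine ⟨0, ?_⟩
      rintro x (hx | rfl)
      · exact hx.1.1
      · exact hT.le
    have hαρ : α ≤ Fρ ρ t := by linarith [(abs_lt.1 h1).2]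
    exact (csInf_le hbdd (Or.inl ⟨htI, hαρ⟩)).trans_lt (htm.trans_le (min_le_left _ _))
end

section
/- Let T > 0 and α ∈ ℝ. Let F : [0,T] → ℝ be continuous with F(t) < α for every t ∈ [0,T). Let (F_ρ)_{ρ≠0} be a family of continuous functions on [0,T] such that sup_{t∈[0,T]} |F_ρ(t) − F(t)| → 0 as ρ → 0. Define τ_ρ := inf({t ∈ [0,T] : F_ρ(t) ≥ α} ∪ {T}). Then τ_ρ → T as ρ → 0. -/
open Set Filter

/-!
The infimum never exceeds `T`, so only lower bounds matter. For `0 < s < T`, the function `F` attains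
its maximum on `[0, s]`, which is below `α`; once `Fρ ρ` is uniformly closer to `F` than this gap,
it stays below `α` on `[0, s]`, hence the infimum is at least `s`.
-/

/-- Lemma 3.1(ii) (deterministic content): when the constraint level is
reached only at the terminal time `T` (i.e. `F < α` on `[0,T)`), the perturbed
terminal times converge to `T`. -/
theorem terminal_time_continuity_boundary
    (T α : ℝ) (hT : 0 < T) (F : ℝ → ℝ)
    (hF : ContinuousOn F (Set.Icc 0 T))
    (hlt : ∀ t ∈ Set.Ico 0 T, F t < α)
    (Fρ : ℝ → ℝ → ℝ)
    (hFρcont : ∀ ρ : ℝ, ρ ≠ 0 → ContinuousOn (Fρ ρ) (Set.Icc 0 T))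
    (hconv : TendstoUniformlyOn Fρ F (nhdsWithin 0 {(0 : ℝ)}ᶜ) (Set.Icc 0 T)) :
    Tendsto (fun ρ : ℝ => sInf ({t ∈ Set.Icc 0 T | α ≤ Fρ ρ t} ∪ {T}))
      (nhdsWithin 0 {(0 : ℝ)}ᶜ) (nhds T) := by
  refine tendsto_order.2 ⟨fun a ha => ?_, fun b hb => Eventually.of_forall fun ρ => ?_⟩
  · obtain ⟨s, hs, hsT⟩ := exists_between (max_lt ha hT)
    have has : a < s := (le_max_left _ _).trans_lt hs
    have hs0 : 0 < s := (le_max_right _ _).trans_lt hs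
    -- On the compact interval `[0, s]` the gap `α - F` is at least `α - F x > 0`.
    obtain ⟨x, hx, hmax⟩ := isCompact_Icc.exists_isMaxOn (nonempty_Icc.2 hs0.le)
      (hF.mono (Icc_subset_Icc_right hsT.le))
    have hxα : F x < α := hlt x ⟨hx.1, hx.2.trans_lt hsT⟩
    filter_upwards [Metric.tendstoUniformlyOn_iff.1 hconv (α - F x) (sub_pos.2 hxα)] with ρ hρ
    refine has.trans_le (le_csInf ⟨T, Or.inr rfl⟩ ?_)
    rintro t (⟨ht, hαt⟩ | rfl)
    · by_contra! hts
      have h1 := hρ t ht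
      have h2 : F t ≤ F x := hmax ⟨ht.1, hts.le⟩
      rw [Real.dist_eq] at h1
      linarith [(abs_lt.1 h1).1]
    · exact hsT.le
  · refine lt_of_le_of_lt (csInf_le ⟨0, ?_⟩ (mem_union_right _ (mem_singleton T))) hb
    rintro t (⟨ht, -⟩ | rfl)
    · exact ht.1
    · exact hT.le
end

section
/- Let T > 0, α, c ∈ ℝ, and let h : [0,T] → ℝ and g : [0,T] → ℝ be integrable, with h continuous at a point τ ∈ (0,T) and h(τ) ≠ 0. Let (h_ρ)_{ρ≠0} be a family of integrable functions on [0,T] such that (h_ρ − h)/ρ converges to g uniformly on [0,T] as ρ → 0. Set F(s) = c + ∫₀ˢ h(t) dt and F_ρ(s) = c + ∫₀ˢ h_ρ(t) dt. Suppose F(τ) = α, and suppose (τ_ρ)_{ρ≠0} ⊆ [0,T] satisfies τ_ρ → τ as ρ → 0 and F_ρ(τ_ρ) = α for all ρ ≠ 0 sufficiently close to 0. Then (τ − τ_ρ)/ρ → (1/h(τ)) ∫₀^τ g(t) dt as ρ → 0. -/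
/-!
Since `h` is continuous at `τ`, `F` has derivative `h τ` there, so the difference quotient
`dslope F τ (τ_ρ)` tends to `h τ ≠ 0`. The two constraints give `F τ = F_ρ (τ_ρ)`, whence
`dslope F τ (τ_ρ) * ((τ - τ_ρ) / ρ) = ∫₀^{τ_ρ} (h_ρ - h) / ρ`. By uniform convergence the right
side differs by `o(1)` from `∫₀^{τ_ρ} g`, which tends to `∫₀^τ g`
(`tendsto_integral_of_tendstoUniformlyOn_of_tendsto`); dividing gives the claim. Working with
`dslope` avoids any separate treatment of those `ρ` for which `τ_ρ = τ`.
-/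

open Set Filter MeasureTheory intervalIntegral

/-- Convergence of integrals when the integrand (uniformly) and the upper limit vary together. -/
lemma tendsto_integral_of_tendstoUniformlyOn_of_tendsto {ι : Type*} {l : Filter ι} {T τ : ℝ}
    {k : ι → ℝ → ℝ} {g : ℝ → ℝ} {σ : ι → ℝ} (gint : IntegrableOn g (Set.Icc 0 T))
    (hτ : τ ∈ Set.Icc 0 T) (hk : ∀ᶠ i in l, IntegrableOn (k i) (Set.Icc 0 T))
    (hconv : TendstoUniformlyOn k g l (Set.Icc 0 T))
    (hσmem : ∀ᶠ i in l, σ i ∈ Set.Icc 0 T) (hσ : Tendsto σ l (nhds τ)) :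
    Tendsto (fun i => ∫ t in (0 : ℝ)..σ i, k i t) l (nhds (∫ t in (0 : ℝ)..τ, g t)) := by
  have hT : 0 ≤ T := hτ.1.trans hτ.2
  have hg : Tendsto (fun i => ∫ t in (0 : ℝ)..σ i, g t) l (nhds (∫ t in (0 : ℝ)..τ, g t)) := by
    have hc : ContinuousOn (fun s => ∫ t in (0 : ℝ)..s, g t) (Set.Icc 0 T) := by
      have := continuousOn_primitive_interval (μ := volume) (f := g) (a := 0) (b := T)
        (by rwa [uIcc_of_le hT])
      rwa [uIcc_of_le hT] at this
    exact (hc τ hτ).tendsto.comp (tendsto_nhdsWithin_iff.2 ⟨hσ, hσmem⟩)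
  have hd : Tendsto (fun i => (∫ t in (0 : ℝ)..σ i, k i t) - ∫ t in (0 : ℝ)..σ i, g t) l
      (nhds 0) := by
    rw [Metric.tendsto_nhds]
    intro ε hε
    -- A uniform error below `ε / (T + 1)` integrates to less than `ε` over a length at most `T`.
    filter_upwards [hk, hσmem, Metric.tendstoUniformlyOn_iff.1 hconv (ε / (T + 1)) (by positivity)]
      with i hki hi hclose
    have hsub : Set.uIcc 0 (σ i) ⊆ Set.Icc 0 T := by
      rw [uIcc_of_le hi.1]
      exact Icc_subset_Icc_right hi.2
    rw [dist_zero_right, ← integral_sub (hki.mono_set hsub).intervalIntegrable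
      (gint.mono_set hsub).intervalIntegrable]
    have hb := norm_integral_le_of_norm_le_const (a := 0) (b := σ i) (C := ε / (T + 1))
      (f := fun t => k i t - g t) (fun t ht => by
        have := hclose t (hsub (uIoc_subset_uIcc ht))
        rw [dist_comm, dist_eq_norm] at this
        exact this.le)
    refine hb.trans_lt ?_
    rw [sub_zero, abs_of_nonneg hi.1, div_mul_eq_mul_div, div_lt_iff₀ (by positivity)]
    exact mul_lt_mul_of_pos_left (by linarith [hi.2]) hε
  simpa using hd.add hg

/-- Lemma 3.3(i) (deterministic content): the first-order variation of the
varying terminal time.  With `F s = c + ∫₀ˢ h` and `F_ρ s = c + ∫₀ˢ h_ρ`,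
where `(h_ρ - h)/ρ → g` uniformly, `F τ = α`, `τ_ρ → τ` and `F_ρ (τ_ρ) = α`
eventually, one gets `(τ - τ_ρ)/ρ → (1 / h τ) ∫₀^τ g`. -/
theorem terminal_time_first_variation
    (T α c : ℝ) (hT : 0 < T)
    (h g : ℝ → ℝ)
    (hint : IntegrableOn h (Set.Icc 0 T))
    (gint : IntegrableOn g (Set.Icc 0 T))
    (τ : ℝ) (hτmem : τ ∈ Set.Ioo 0 T)
    (hcont : ContinuousAt h τ) (hne : h τ ≠ 0)
    (hρ : ℝ → ℝ → ℝ)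
    (hρint : ∀ ρ : ℝ, ρ ≠ 0 → IntegrableOn (hρ ρ) (Set.Icc 0 T))
    (hconv : TendstoUniformlyOn (fun ρ t => (hρ ρ t - h t) / ρ) g
      (nhdsWithin 0 {(0 : ℝ)}ᶜ) (Set.Icc 0 T))
    (F : ℝ → ℝ)
    (hF : ∀ s, F s = c + ∫ t in (0 : ℝ)..s, h t)
    (Fρ : ℝ → ℝ → ℝ)
    (hFρ : ∀ ρ s, Fρ ρ s = c + ∫ t in (0 : ℝ)..s, hρ ρ t)
    (hFτ : F τ = α)
    (τρ : ℝ → ℝ)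
    (hτρmem : ∀ ρ : ℝ, ρ ≠ 0 → τρ ρ ∈ Set.Icc 0 T)
    (hτρconv : Tendsto τρ (nhdsWithin 0 {(0 : ℝ)}ᶜ) (nhds τ))
    (hτρeq : ∀ᶠ ρ : ℝ in nhdsWithin 0 {(0 : ℝ)}ᶜ, Fρ ρ (τρ ρ) = α) :
    Tendsto (fun ρ : ℝ => (τ - τρ ρ) / ρ) (nhdsWithin 0 {(0 : ℝ)}ᶜ)
      (nhds ((1 / h τ) * ∫ t in (0 : ℝ)..τ, g t)) := by
  have hpunc : ∀ᶠ ρ : ℝ in nhdsWithin 0 {(0 : ℝ)}ᶜ, ρ ≠ 0 := eventually_mem_nhdsWithin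
  have hτ : τ ∈ Set.Icc 0 T := Ioo_subset_Icc_self hτmem
  have hsub : ∀ s ∈ Set.Icc 0 T, Set.uIcc 0 s ⊆ Set.Icc 0 T := fun s hs => by
    rw [uIcc_of_le hs.1]
    exact Icc_subset_Icc_right hs.2
  have hderiv : HasDerivAt F (h τ) τ := by
    rw [funext hF]
    exact (integral_hasDerivAt_right (hint.mono_set (hsub τ hτ)).intervalIntegrable
      ⟨Set.Icc 0 T, Icc_mem_nhds hτmem.1 hτmem.2, hint.aestronglyMeasurable⟩ hcont).const_add c
  have hslope : Tendsto (fun ρ => dslope F τ (τρ ρ)) (nhdsWithin 0 {(0 : ℝ)}ᶜ)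
      (nhds (h τ)) := by
    have hc : Tendsto (dslope F τ) (nhds τ) (nhds (dslope F τ τ)) :=
      continuousAt_dslope_same.2 hderiv.differentiableAt
    rw [dslope_same, hderiv.deriv] at hc
    exact hc.comp hτρconv
  have hlim : Tendsto (fun ρ => ∫ t in (0 : ℝ)..τρ ρ, (hρ ρ t - h t) / ρ)
      (nhdsWithin 0 {(0 : ℝ)}ᶜ) (nhds (∫ t in (0 : ℝ)..τ, g t)) :=
    tendsto_integral_of_tendstoUniformlyOn_of_tendsto gint hτ
      (hpunc.mono fun ρ h0 => ((hρint ρ h0).sub hint).div_const ρ) hconv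
      (hpunc.mono hτρmem) hτρconv
  rw [one_div_mul_eq_div]
  refine (hlim.div hslope hne).congr' ?_
  filter_upwards [hpunc, hτρeq, hslope.eventually_ne hne] with ρ h0 hα hs
  have hmem := hsub _ (hτρmem ρ h0)
  have hmul : (τρ ρ - τ) * dslope F τ (τρ ρ) = F (τρ ρ) - F τ := by
    simpa using sub_smul_dslope F τ (τρ ρ)
  have hdiff : ∫ t in (0 : ℝ)..τρ ρ, (hρ ρ t - h t) / ρ = (F τ - F (τρ ρ)) / ρ := by
    rw [intervalIntegral.integral_div, integral_sub
      ((hρint ρ h0).mono_set hmem).intervalIntegrable (hint.mono_set hmem).intervalIntegrable,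
      hFτ, ← hα, hFρ, hF]
    ring
  rw [Pi.div_apply, hdiff, div_eq_iff hs]
  linear_combination (1 / ρ) * hmul
end

section
/- The function ρ ↦ (1 − (2 + ρ − √(4ρ + ρ²))/2)/ρ tends to +∞ as ρ → 0⁺ (along the filter of positive reals approaching 0). -/
open Filter

/-- Example 3.1, Case 2: the right-hand difference quotient
`(1 − (2 + ρ − √(4ρ + ρ²))/2)/ρ` tends to `+∞` as `ρ → 0⁺`. -/
theorem example31_case2_right_limit :
    Tendsto (fun ρ : ℝ => (1 - (2 + ρ - Real.sqrt (4 * ρ + ρ ^ 2)) / 2) / ρ)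
      (nhdsWithin 0 (Set.Ioi 0)) atTop := by
  -- Since `√(4ρ + ρ²) ≥ 2√ρ`, the quotient is at least `1/√ρ - 1/2`.
  have hsqrt : Tendsto Real.sqrt (nhdsWithin 0 (Set.Ioi 0)) (nhdsWithin 0 (Set.Ioi 0)) := by
    refine tendsto_nhdsWithin_iff.2 ⟨?_, ?_⟩
    · have h := Real.continuous_sqrt.tendsto 0
      rw [Real.sqrt_zero] at h
      exact h.mono_left nhdsWithin_le_nhds
    · filter_upwards [self_mem_nhdsWithin] with ρ hρ
      exact Real.sqrt_pos.2 hρ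
  refine tendsto_atTop_mono' _ ?_
    (tendsto_atTop_add_const_right _ (-(1 / 2) : ℝ) (tendsto_inv_nhdsGT_zero.comp hsqrt))
  filter_upwards [self_mem_nhdsWithin] with ρ hρ
  have hρ0 : 0 < ρ := hρ
  have hs : 0 < Real.sqrt ρ := Real.sqrt_pos.2 hρ0
  have hsq : Real.sqrt ρ ^ 2 = ρ := Real.sq_sqrt hρ0.le
  have hle : 2 * Real.sqrt ρ ≤ Real.sqrt (4 * ρ + ρ ^ 2) := by
    apply Real.le_sqrt_of_sq_le
    nlinarith [sq_nonneg ρ]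
  have hinv : (Real.sqrt ρ)⁻¹ * ρ = Real.sqrt ρ := by
    rw [inv_mul_eq_iff_eq_mul₀ hs.ne', ← sq, hsq]
  rw [Function.comp_apply, le_div_iff₀ hρ0, add_mul, hinv]
  linarith
end
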